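/- Let p ≥ 1 and 1 ≤ s ≤ p be integers and let A, B ∈ ℝ^{p×p}. Then φ²(A, s) ≥ φ²(B, s) − 4 s ‖A − B‖_∞, where ‖A − B‖_∞ denotes the maximum absolute value of the entries of A − B. In particular, if B satisfies Re(s, Φ) for some Φ > 0 and ‖A − B‖_∞ ≤ Φ/(8s), then A satisfies Re(s, Φ/2). -/

import Mathlib

/-!
On the cone `‖δ_{Sᶜ}‖₁ ≤ ‖δ_S‖₁` with `|S| ≤ s` one has `‖δ‖₁ ≤ 2‖δ_S‖₁`, so by Cauchy–Schwarz
`‖δ‖₁² ≤ 4 s ‖δ_S‖₂² ≤ 4 s ‖δ_{M(δ)}‖₂²`; about `M(δ)` only the inclusion `S ⊆ M(δ)` is used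
(`l1_sq_le`). Since `|δᵀDδ| ≤ ‖D‖_∞ ‖δ‖₁²`, the quotient defining `φ²` for `D` is at least
`-4 s ‖D‖_∞` at every admissible `(S, δ)` (`neg_le_quotient`). Taking `D = A - B` gives the claimed
comparison pointwise, and `D = B` shows that the quotients for `B` are bounded below, so that
`phiSq B s` is a genuine infimum. The set of quotients is nonempty (`δ = e₀`, `S = {0}`).
-/

open Matrix BigOperators

/-- Euclidean norm of a vector. -/
noncomputable def eNorm {n : Type*} [Fintype n] (v : n → ℝ) : ℝ :=
  Real.sqrt (∑ i, (v i) ^ 2)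

/-- ℓ¹ norm. -/
noncomputable def l1 {p : ℕ} (v : Fin p → ℝ) : ℝ := ∑ i, |v i|

/-- ℓ^∞ norm. -/
noncomputable def linf {p : ℕ} (v : Fin p → ℝ) : ℝ := ⨆ i, |v i|

/-- ℓ⁰ "norm": number of nonzero entries. -/
noncomputable def l0 {p : ℕ} (v : Fin p → ℝ) : ℕ :=
  (Finset.univ.filter (fun i => v i ≠ 0)).card

/-- Restriction of a vector to a set of coordinates (zero outside the set). -/
def restrict {p : ℕ} (T : Finset (Fin p)) (δ : Fin p → ℝ) : Fin p → ℝ :=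
  fun i => if i ∈ T then δ i else 0

/-- The `k`-th largest value among `{|δ i| : i ∈ T}` (counted with multiplicity),
characterised as the supremum of thresholds `t` for which at least `k` entries of `|δ|`
on `T` are `≥ t`. -/
noncomputable def kthLargest {p : ℕ} (T : Finset (Fin p)) (δ : Fin p → ℝ) (k : ℕ) : ℝ :=
  sSup {t : ℝ | k ≤ (T.filter (fun i => t ≤ |δ i|)).card}

/-- The set `M(δ) = S ∪ {i ∈ Sᶜ : |δ i| ≥ |δ_{Sᶜ}|_(min{s,|Sᶜ|})}`. -/
noncomputable def Mset {p : ℕ} (S : Finset (Fin p)) (s : ℕ) (δ : Fin p → ℝ) : Finset (Fin p) :=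
  S ∪ (Sᶜ.filter (fun i => kthLargest Sᶜ δ (min s Sᶜ.card) ≤ |δ i|))

/-- The restricted eigenvalue quantity `φ²(A, s)`. -/
noncomputable def phiSq {p : ℕ} (A : Matrix (Fin p) (Fin p) ℝ) (s : ℕ) : ℝ :=
  sInf {r : ℝ | ∃ (S : Finset (Fin p)) (δ : Fin p → ℝ),
    S.card ≤ s ∧ δ ≠ 0 ∧ l1 (restrict Sᶜ δ) ≤ l1 (restrict S δ) ∧
    r = (δ ⬝ᵥ A.mulVec δ) / (eNorm (restrict (Mset S s δ) δ)) ^ 2}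

/-- The restricted eigenvalue condition `Re(s, Φ)`. -/
def Re {p : ℕ} (A : Matrix (Fin p) (Fin p) ℝ) (s : ℕ) (Φ : ℝ) : Prop :=
  Φ ≤ phiSq A s

/-- Entrywise sup-norm of a matrix. -/
noncomputable def matInf {p : ℕ} (A : Matrix (Fin p) (Fin p) ℝ) : ℝ := ⨆ i, ⨆ j, |A i j|

lemma abs_le_matInf {p : ℕ} (D : Matrix (Fin p) (Fin p) ℝ) (i j : Fin p) :
    |D i j| ≤ matInf D :=
  (le_ciSup (Set.finite_range fun j => |D i j|).bddAbove j).trans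
    (le_ciSup (Set.finite_range fun i => ⨆ j, |D i j|).bddAbove i)

lemma matInf_nonneg {p : ℕ} (D : Matrix (Fin p) (Fin p) ℝ) : 0 ≤ matInf D :=
  Real.iSup_nonneg fun _ => Real.iSup_nonneg fun _ => abs_nonneg _

lemma abs_quadForm_le {p : ℕ} (D : Matrix (Fin p) (Fin p) ℝ) (δ : Fin p → ℝ) :
    |δ ⬝ᵥ D.mulVec δ| ≤ matInf D * l1 δ ^ 2 := by
  have h : δ ⬝ᵥ D.mulVec δ = ∑ i, ∑ j, δ i * (D i j * δ j) := by
    simp [dotProduct, Matrix.mulVec, Finset.mul_sum]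
  have h' : matInf D * l1 δ ^ 2 = ∑ i, ∑ j, matInf D * (|δ i| * |δ j|) := by
    rw [l1, sq, Finset.sum_mul_sum]
    simp [Finset.mul_sum]
  rw [h, h']
  refine (Finset.abs_sum_le_sum_abs _ _).trans (Finset.sum_le_sum fun i _ => ?_)
  refine (Finset.abs_sum_le_sum_abs _ _).trans (Finset.sum_le_sum fun j _ => ?_)
  rw [abs_mul, abs_mul]
  calc |δ i| * (|D i j| * |δ j|) = |D i j| * (|δ i| * |δ j|) := by ring
    _ ≤ _ := mul_le_mul_of_nonneg_right (abs_le_matInf D i j) (by positivity)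

lemma l1_restrict {p : ℕ} (T : Finset (Fin p)) (δ : Fin p → ℝ) :
    l1 (restrict T δ) = ∑ i ∈ T, |δ i| := by
  simp [l1, restrict, apply_ite abs, Finset.sum_ite_mem]

lemma eNorm_restrict_sq {p : ℕ} (T : Finset (Fin p)) (δ : Fin p → ℝ) :
    eNorm (restrict T δ) ^ 2 = ∑ i ∈ T, δ i ^ 2 := by
  rw [eNorm, Real.sq_sqrt (Finset.sum_nonneg fun _ _ => sq_nonneg _)]
  simp [restrict, ite_pow, Finset.sum_ite_mem]

/-- On the cone, the squared `ℓ¹` norm is controlled by the denominator of the quotient. -/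
lemma l1_sq_le {p s : ℕ} {S : Finset (Fin p)} {δ : Fin p → ℝ} (hS : S.card ≤ s)
    (hc : l1 (restrict Sᶜ δ) ≤ l1 (restrict S δ)) :
    l1 δ ^ 2 ≤ 4 * s * eNorm (restrict (Mset S s δ) δ) ^ 2 := by
  rw [l1_restrict, l1_restrict] at hc
  have hsplit : l1 δ = ∑ i ∈ S, |δ i| + ∑ i ∈ Sᶜ, |δ i| :=
    (Finset.sum_add_sum_compl S _).symm
  have h0 : 0 ≤ l1 δ := Finset.sum_nonneg fun _ _ => abs_nonneg _
  have hM : ∑ i ∈ S, δ i ^ 2 ≤ ∑ i ∈ Mset S s δ, δ i ^ 2 :=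
    Finset.sum_le_sum_of_subset_of_nonneg Finset.subset_union_left fun _ _ _ => sq_nonneg _
  have hCS : (∑ i ∈ S, |δ i|) ^ 2 ≤ S.card * ∑ i ∈ S, δ i ^ 2 := by
    simpa [sq_abs] using sq_sum_le_card_mul_sum_sq (s := S) (f := fun i => |δ i|)
  rw [eNorm_restrict_sq]
  calc l1 δ ^ 2 ≤ (2 * ∑ i ∈ S, |δ i|) ^ 2 := pow_le_pow_left₀ h0 (by linarith) 2
    _ = 4 * (∑ i ∈ S, |δ i|) ^ 2 := by ring
    _ ≤ 4 * (S.card * ∑ i ∈ S, δ i ^ 2) := by linarith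
    _ ≤ 4 * (s * ∑ i ∈ Mset S s δ, δ i ^ 2) := by
        have : (S.card : ℝ) ≤ s := by exact_mod_cast hS
        gcongr
    _ = _ := by ring

lemma neg_le_quotient {p s : ℕ} (D : Matrix (Fin p) (Fin p) ℝ) {S : Finset (Fin p)}
    {δ : Fin p → ℝ} (hS : S.card ≤ s) (hc : l1 (restrict Sᶜ δ) ≤ l1 (restrict S δ)) :
    -(4 * s * matInf D) ≤ (δ ⬝ᵥ D.mulVec δ) / eNorm (restrict (Mset S s δ) δ) ^ 2 := by
  have hm := matInf_nonneg D
  have h1 := (abs_le.1 (abs_quadForm_le D δ)).1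
  have h2 := mul_le_mul_of_nonneg_left (l1_sq_le hS hc) hm
  -- A zero denominator would make the quotient `0`, for which the bound holds trivially.
  rcases (sq_nonneg (eNorm (restrict (Mset S s δ) δ))).eq_or_lt with h | h
  · rw [← h, div_zero]
    have : 0 ≤ 4 * (s : ℝ) * matInf D := by positivity
    linarith
  · rw [le_div_iff₀ h]
    linarith

theorem stmt6 (p s : ℕ) (hp : 1 ≤ p) (hs1 : 1 ≤ s) (hsp : s ≤ p)
    (A B : Matrix (Fin p) (Fin p) ℝ) :
    phiSq B s - 4 * s * matInf (A - B) ≤ phiSq A s ∧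
    ∀ Φ : ℝ, 0 < Φ → Re B s Φ → matInf (A - B) ≤ Φ / (8 * s) → Re A s (Φ / 2) := by
  have main : phiSq B s - 4 * s * matInf (A - B) ≤ phiSq A s := by
    refine le_csInf ?_ ?_
    · refine ⟨_, {⟨0, hp⟩}, Pi.single ⟨0, hp⟩ 1, by simpa using hs1, by simp, ?_, rfl⟩
      rw [l1_restrict, l1_restrict]
      have h : ∑ i ∈ ({⟨0, hp⟩} : Finset (Fin p))ᶜ,
          |(Pi.single ⟨0, hp⟩ 1 : Fin p → ℝ) i| = 0 :=
        Finset.sum_eq_zero fun i hi => by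
          rw [Pi.single_eq_of_ne (by simpa using hi), abs_zero]
      rw [h]
      exact Finset.sum_nonneg fun _ _ => abs_nonneg _
    · rintro r ⟨S, δ, hS, hδ, hc, rfl⟩
      have hB : phiSq B s ≤ (δ ⬝ᵥ B.mulVec δ) / eNorm (restrict (Mset S s δ) δ) ^ 2 := by
        refine csInf_le ⟨-(4 * s * matInf B), ?_⟩ ⟨S, δ, hS, hδ, hc, rfl⟩
        rintro r ⟨S, δ, hS, -, hc, rfl⟩
        exact neg_le_quotient B hS hc
      have hD := neg_le_quotient (A - B) hS hc
      rw [Matrix.sub_mulVec, dotProduct_sub, sub_div] at hD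
      linarith
  refine ⟨main, fun Φ _ hB hm => ?_⟩
  unfold Re at hB ⊢
  have hs : (0 : ℝ) < s := by exact_mod_cast hs1
  rw [le_div_iff₀ (by positivity)] at hm
  linarith
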